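/- arXiv:1011.4253 — 2 statements merged into one kernel-verified Lean document; each statement's English description precedes it below -/
import Mathlib

section
/- Let p : 𝕊 → ℂ be holomorphic on the strip 𝕊 = {w : 0 < Re w < 1} with Re p(w) ≥ 0 for all w ∈ 𝕊. Then for any real a < b there exists a constant C₂(a,b,p) > 0 such that ∫ₐᵇ |Im p(u + iv)| dv ≤ −C₂(a,b,p)·log(u(1−u)) for all u ∈ (0,1). -/
open Complex Set

/-!
Borel–Carathéodory on the disc of radius `s` about `s + iv`, which lies in the strip for `s ≤ 1/2`,
bounds the increase of `|Im p|` from `s + iv` to `u + iv`, `s/2 ≤ u ≤ s`, by `2 Re p(s + iv)`.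
The integrals of `Re p` over vertical segments stay bounded near the left edge: apply Cauchy's
theorem on a rectangle to `p` times a sine that is nonnegative on the left side and purely imaginary
on the horizontal sides, with signs such that the latter only help. Hence each halving of `u` costs
a bounded amount, and about `log₂ (1/u)` halvings are needed. The reflection `w ↦ 1 - w`
handles the right edge.
-/

section Disc

variable {f : ℂ → ℂ} {c z : ℂ} {r : ℝ}

theorem norm_sub_le_of_re_nonneg_on_ball (hf : DifferentiableOn ℂ f (Metric.ball c r))
    (hre : ∀ w ∈ Metric.ball c r, 0 ≤ (f w).re) (hz : z ∈ Metric.ball c r) :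
    ‖f z - f c‖ ≤ 2 * (f c).re * dist z c / (r - dist z c) := by
  have hr : 0 < r := Metric.pos_of_mem_ball hz
  have hmaps : MapsTo (fun w => c + w) (Metric.ball 0 r) (Metric.ball c r) := fun w hw => by
    simpa [dist_eq_norm] using hw
  -- Borel–Carathéodory needs a positive bound on the real part, and `(f c).re` may vanish.
  have hpos : ∀ ε > 0, ‖f z - f c‖ ≤ 2 * ((f c).re + ε) * dist z c / (r - dist z c) := by
    intro ε hε
    have hc : 0 ≤ (f c).re := hre c (Metric.mem_ball_self hr)
    have h := borelCaratheodory_zero (f := fun w => f c - f (c + w)) (M := (f c).re + ε)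
      (z := z - c) (by positivity) ((hf.comp (by fun_prop) hmaps).const_sub _)
      (fun w hw => by
        have := hre _ (hmaps hw)
        simp only [mem_ofPred_eq, sub_re]
        linarith)
      hr (by simpa [dist_eq_norm] using hz) (by simp)
    simpa [← dist_eq_norm, dist_comm (f c)] using h
  have hlim : Filter.Tendsto (fun ε : ℝ => 2 * ((f c).re + ε) * dist z c / (r - dist z c))
      (nhdsWithin 0 (Ioi 0)) (nhds (2 * (f c).re * dist z c / (r - dist z c))) :=
    (Continuous.tendsto' (by fun_prop) 0 _ (by simp)).mono_left nhdsWithin_le_nhds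
  exact ge_of_tendsto hlim (Filter.eventually_of_mem self_mem_nhdsWithin hpos)

theorem abs_im_le_abs_im_add_two_mul_re (hf : DifferentiableOn ℂ f (Metric.ball c r))
    (hre : ∀ w ∈ Metric.ball c r, 0 ≤ (f w).re) (hr : 0 < r) (hz : dist z c ≤ r / 2) :
    |(f z).im| ≤ |(f c).im| + 2 * (f c).re := by
  have hc : 0 ≤ (f c).re := hre c (Metric.mem_ball_self hr)
  have hratio : dist z c / (r - dist z c) ≤ 1 := (div_le_one (by linarith)).2 (by linarith)
  have hnorm : ‖f z - f c‖ ≤ 2 * (f c).re :=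
    calc ‖f z - f c‖ ≤ 2 * (f c).re * dist z c / (r - dist z c) :=
          norm_sub_le_of_re_nonneg_on_ball hf hre (Metric.mem_ball.2 (by linarith))
      _ = 2 * (f c).re * (dist z c / (r - dist z c)) := mul_div_assoc ..
      _ ≤ 2 * (f c).re := mul_le_of_le_one_right (by positivity) hratio
  have him : |(f z).im - (f c).im| ≤ ‖f z - f c‖ := abs_im_le_norm (f z - f c)
  linarith [abs_sub_abs_le_abs_sub (f z).im (f c).im]

end Disc

section Sine

theorem norm_sin_le_cosh_im (z : ℂ) : ‖Complex.sin z‖ ≤ Real.cosh z.im := by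
  have hneg : ‖Complex.exp (-z * I)‖ = Real.exp z.im := by simp [norm_exp]
  have hpos : ‖Complex.exp (z * I)‖ = Real.exp (-z.im) := by simp [norm_exp]
  have hsub := norm_sub_le (Complex.exp (-z * I)) (Complex.exp (z * I))
  rw [Complex.sin, norm_div, norm_mul, norm_I, mul_one, norm_ofNat, Real.cosh_eq]
  linarith

theorem half_le_sin {x : ℝ} (hx : x ∈ Icc (Real.pi / 6) (5 * Real.pi / 6)) :
    1 / 2 ≤ Real.sin x := by
  have hdist : |x - Real.pi / 2| ≤ Real.pi / 3 := abs_le.2 ⟨by linarith [hx.1], by linarith [hx.2]⟩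
  rw [← Real.cos_pi_div_three, ← Real.cos_sub_pi_div_two, ← Real.cos_abs (x - _)]
  exact Real.cos_le_cos_of_nonneg_of_le_pi (abs_nonneg _) (by linarith [Real.pi_pos]) hdist

theorem sin_pi_div_mul_nonneg {α β y : ℝ} (hy : y ∈ Icc α β) :
    0 ≤ Real.sin (Real.pi / (β - α) * (y - α)) := by
  have hy0 : 0 ≤ y - α := sub_nonneg.2 hy.1
  have hL : 0 ≤ β - α := sub_nonneg.2 (hy.1.trans hy.2)
  have hratio : (y - α) / (β - α) ≤ 1 := div_le_one_of_le₀ (sub_le_sub_right hy.2 α) hL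
  rw [div_mul_eq_mul_div, mul_div_assoc]
  exact Real.sin_nonneg_of_nonneg_of_le_pi (by positivity)
    (mul_le_of_le_one_right Real.pi_pos.le hratio)

theorem half_le_sin_pi_div_mul {α β y : ℝ} (hαβ : α < β)
    (hy : y ∈ Icc (α + (β - α) / 6) (β - (β - α) / 6)) :
    1 / 2 ≤ Real.sin (Real.pi / (β - α) * (y - α)) := by
  have hL : 0 < β - α := sub_pos.2 hαβ
  have hlow : 1 / 6 ≤ (y - α) / (β - α) := (le_div_iff₀ hL).2 (by linarith [hy.1])
  have hupp : (y - α) / (β - α) ≤ 5 / 6 := (div_le_iff₀ hL).2 (by linarith [hy.2])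
  rw [div_mul_eq_mul_div, mul_div_assoc]
  exact half_le_sin ⟨by nlinarith [Real.pi_pos], by nlinarith [Real.pi_pos]⟩

theorem integral_le_two_mul_integral_mul_sin {φ : ℝ → ℝ} {a b α β : ℝ} (hαβ : α < β)
    (hα : α + (β - α) / 6 ≤ a) (hab : a ≤ b) (hβ : b ≤ β - (β - α) / 6)
    (hφ : ContinuousOn φ (Icc α β)) (hφ0 : ∀ y ∈ Icc α β, 0 ≤ φ y) :
    ∫ y in a..b, φ y ≤ 2 * ∫ y in α..β, φ y * Real.sin (Real.pi / (β - α) * (y - α)) := by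
  have hαa : α ≤ a := by linarith
  have hbβ : b ≤ β := by linarith
  have hsub : Icc a b ⊆ Icc α β := Icc_subset_Icc hαa hbβ
  have hcont : ContinuousOn
      (fun y => 2 * (φ y * Real.sin (Real.pi / (β - α) * (y - α)))) (Icc α β) :=
    continuousOn_const.mul (hφ.mul (by fun_prop))
  rw [← intervalIntegral.integral_const_mul]
  calc ∫ y in a..b, φ y
      ≤ ∫ y in a..b, 2 * (φ y * Real.sin (Real.pi / (β - α) * (y - α))) := by
        refine intervalIntegral.integral_mono_on hab
          ((hφ.mono hsub).intervalIntegrable_of_Icc hab)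
          ((hcont.mono hsub).intervalIntegrable_of_Icc hab) fun y hy => ?_
        have hsin : 1 / 2 ≤ Real.sin (Real.pi / (β - α) * (y - α)) :=
          half_le_sin_pi_div_mul hαβ (Icc_subset_Icc hα hβ hy)
        linarith [mul_le_mul_of_nonneg_left hsin (hφ0 y (hsub hy))]
    _ ≤ ∫ y in α..β, 2 * (φ y * Real.sin (Real.pi / (β - α) * (y - α))) := by
        refine intervalIntegral.integral_mono_interval hαa hab hbβ ?_
          (hcont.intervalIntegrable_of_Icc (hαa.trans (hab.trans hbβ)))
        filter_upwards [MeasureTheory.ae_restrict_mem measurableSet_Ioc] with y hy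
        have hy' : y ∈ Icc α β := Ioc_subset_Icc_self hy
        exact mul_nonneg zero_le_two (mul_nonneg (hφ0 y hy') (sin_pi_div_mul_nonneg hy'))

end Sine

section Rectangle

variable {f : ℂ → ℂ} {s t α β : ℝ}

theorem continuousOn_horizontal_segment {S T : Set ℝ} {y : ℝ} (hf : ContinuousOn f (S ×ℂ T))
    (hy : y ∈ T) : ContinuousOn (fun x : ℝ => f (x + y * I)) S :=
  hf.comp (by fun_prop) fun x hx => by simpa [mem_reProdIm] using ⟨hx, hy⟩

theorem continuousOn_vertical_segment {S T : Set ℝ} {x : ℝ} (hf : ContinuousOn f (S ×ℂ T))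
    (hx : x ∈ S) : ContinuousOn (fun y : ℝ => f (x + y * I)) T :=
  hf.comp (by fun_prop) fun y hy => by simpa [mem_reProdIm] using ⟨hx, hy⟩

theorem integral_re_left_eq_of_differentiableOn_rect (hst : s ≤ t) (hαβ : α ≤ β)
    (hf : DifferentiableOn ℂ f (Icc s t ×ℂ Icc α β)) :
    ∫ y in α..β, (f (s + y * I)).re =
      (∫ y in α..β, (f (t + y * I)).re) + (∫ x in s..t, (f (x + α * I)).im) -
        ∫ x in s..t, (f (x + β * I)).im := by
  have hvert : ∀ x ∈ Icc s t, (∫ y in α..β, f (x + y * I)).re = ∫ y in α..β, (f (x + y * I)).re :=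
    fun x hx => (intervalIntegral.intervalIntegral_re
      ((continuousOn_vertical_segment hf.continuousOn hx).intervalIntegrable_of_Icc hαβ)).symm
  have hhor : ∀ y ∈ Icc α β, (∫ x in s..t, f (x + y * I)).im = ∫ x in s..t, (f (x + y * I)).im :=
    fun y hy => (intervalIntegral.intervalIntegral_im
      ((continuousOn_horizontal_segment hf.continuousOn hy).intervalIntegrable_of_Icc hst)).symm
  have hcauchy := integral_boundary_rect_eq_zero_of_differentiableOn f (s + α * I) (t + β * I)
    (by simpa [uIcc_of_le hst, uIcc_of_le hαβ] using hf)
  have him := congrArg Complex.im hcauchy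
  simp only [add_re, ofReal_re, mul_re, I_re, mul_zero, ofReal_im, I_im, mul_one, sub_self,
    add_zero, add_im, mul_im, zero_add, smul_eq_mul, sub_im, zero_im] at him
  rw [← hvert s (left_mem_Icc.2 hst), ← hvert t (right_mem_Icc.2 hst),
    ← hhor α (left_mem_Icc.2 hαβ), ← hhor β (right_mem_Icc.2 hαβ)]
  linarith

/-- The weight for Cauchy's theorem on rectangles with left side `{s} × [α, β]`: the entire function
that restricts to `y ↦ sin (π (y - α) / (β - α))` on the line `Re w = s`, chosen because it is
purely imaginary on the lines `Im w = α` and `Im w = β`. -/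
noncomputable def sineWeight (s α β : ℝ) (w : ℂ) : ℂ :=
  Complex.sin (Real.pi / (β - α) * (-I * (w - s) - α))

theorem differentiable_sineWeight (s α β : ℝ) : Differentiable ℂ (sineWeight s α β) := by
  unfold sineWeight
  fun_prop

theorem sineWeight_left (s α β y : ℝ) :
    sineWeight s α β (s + y * I) = Real.sin (Real.pi / (β - α) * (y - α)) := by
  rw [sineWeight, ofReal_sin]
  congr 1
  push_cast
  linear_combination (-Real.pi / (β - α) * y : ℂ) * I_sq

theorem sineWeight_bottom (s α β x : ℝ) :
    sineWeight s α β (x + α * I) = -(Real.sinh (Real.pi / (β - α) * (x - s)) * I) := by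
  rw [sineWeight, ofReal_sinh, ← Complex.sin_mul_I, ← Complex.sin_neg]
  congr 1
  push_cast
  linear_combination (-Real.pi / (β - α) * α : ℂ) * I_sq

theorem sineWeight_top (hαβ : α < β) (s x : ℝ) :
    sineWeight s α β (x + β * I) = Real.sinh (Real.pi / (β - α) * (x - s)) * I := by
  have hne : (β - α : ℂ) ≠ 0 := by exact_mod_cast (sub_pos.2 hαβ).ne'
  have hpi : (Real.pi / (β - α) * (β - α) : ℂ) = Real.pi := div_mul_cancel₀ _ hne
  rw [sineWeight, ofReal_sinh, ← Complex.sin_mul_I, ← Complex.sin_pi_sub]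
  congr 1
  push_cast
  linear_combination (Real.pi / (β - α) * β : ℂ) * I_sq - hpi

theorem norm_sineWeight_le (s α β : ℝ) (w : ℂ) :
    ‖sineWeight s α β w‖ ≤ Real.cosh (Real.pi / (β - α) * (w.re - s)) := by
  have him : (Real.pi / (β - α) * (-I * (w - s) - α) : ℂ).im =
      -(Real.pi / (β - α) * (w.re - s)) := by
    rw [← ofReal_sub, ← ofReal_div, im_ofReal_mul, ← mul_neg]
    simp
  simpa only [sineWeight, him, Real.cosh_neg] using
    norm_sin_le_cosh_im (Real.pi / (β - α) * (-I * (w - s) - α))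

theorem integral_re_mul_sineWeight_le (hst : s ≤ t) (hαβ : α < β)
    (hf : DifferentiableOn ℂ f (Icc s t ×ℂ Icc α β))
    (hre : ∀ w ∈ Icc s t ×ℂ Icc α β, 0 ≤ (f w).re) :
    ∫ y in α..β, (f (s + y * I)).re * Real.sin (Real.pi / (β - α) * (y - α)) ≤
      ∫ y in α..β, (f (t + y * I) * sineWeight s α β (t + y * I)).re := by
  have hsinh : ∀ x ∈ Icc s t, 0 ≤ Real.sinh (Real.pi / (β - α) * (x - s)) := fun x hx =>
    Real.sinh_nonneg_iff.2 <| mul_nonneg (div_nonneg Real.pi_pos.le (by linarith))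
      (sub_nonneg.2 hx.1)
  have hbottom : 0 ≤ ∫ x in s..t, -(f (x + α * I) * sineWeight s α β (x + α * I)).im :=
    intervalIntegral.integral_nonneg hst fun x hx => by
      have := mul_nonneg (hre (x + α * I) (by simpa [mem_reProdIm, hαβ.le] using hx)) (hsinh x hx)
      simpa [sineWeight_bottom, -ofReal_sinh] using this
  have htop : 0 ≤ ∫ x in s..t, (f (x + β * I) * sineWeight s α β (x + β * I)).im :=
    intervalIntegral.integral_nonneg hst fun x hx => by
      have := mul_nonneg (hre (x + β * I) (by simpa [mem_reProdIm, hαβ.le] using hx)) (hsinh x hx)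
      simpa [sineWeight_top hαβ, -ofReal_sinh] using this
  have hcauchy := integral_re_left_eq_of_differentiableOn_rect hst hαβ.le
    (hf.mul (differentiable_sineWeight s α β).differentiableOn)
  simp only [Pi.mul_apply, sineWeight_left, re_mul_ofReal] at hcauchy
  rw [intervalIntegral.integral_neg] at hbottom
  linarith

theorem integral_re_mul_sin_le (hst : s ≤ t) (hαβ : α < β)
    (hf : DifferentiableOn ℂ f (Icc s t ×ℂ Icc α β))
    (hre : ∀ w ∈ Icc s t ×ℂ Icc α β, 0 ≤ (f w).re) :
    ∫ y in α..β, (f (s + y * I)).re * Real.sin (Real.pi / (β - α) * (y - α)) ≤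
      Real.cosh (Real.pi / (β - α) * (t - s)) * ∫ y in α..β, ‖f (t + y * I)‖ := by
  have hright : ContinuousOn (fun y : ℝ => f (t + y * I)) (Icc α β) :=
    continuousOn_vertical_segment hf.continuousOn (right_mem_Icc.2 hst)
  have hweight : Continuous fun y : ℝ => sineWeight s α β (t + y * I) :=
    (differentiable_sineWeight s α β).continuous.comp (by fun_prop)
  rw [← intervalIntegral.integral_const_mul]
  refine (integral_re_mul_sineWeight_le hst hαβ hf hre).trans <|
    intervalIntegral.integral_mono_on hαβ.le
      ((continuous_re.comp_continuousOn (hright.mul hweight.continuousOn)).intervalIntegrable_of_Icc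
        hαβ.le)
      ((continuousOn_const.mul hright.norm).intervalIntegrable_of_Icc hαβ.le) fun y _ => ?_
  calc (f (t + y * I) * sineWeight s α β (t + y * I)).re
      ≤ ‖f (t + y * I)‖ * ‖sineWeight s α β (t + y * I)‖ := (re_le_norm _).trans_eq (norm_mul _ _)
    _ ≤ ‖f (t + y * I)‖ * Real.cosh (Real.pi / (β - α) * (t - s)) := by
        gcongr
        simpa using norm_sineWeight_le s α β (t + y * I)
    _ = Real.cosh (Real.pi / (β - α) * (t - s)) * ‖f (t + y * I)‖ := mul_comm _ _

theorem integral_re_le_of_re_nonneg_on_rect {a b : ℝ} (hst : s ≤ t) (hαβ : α < β)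
    (hα : α + (β - α) / 6 ≤ a) (hab : a ≤ b) (hβ : b ≤ β - (β - α) / 6)
    (hf : DifferentiableOn ℂ f (Icc s t ×ℂ Icc α β))
    (hre : ∀ w ∈ Icc s t ×ℂ Icc α β, 0 ≤ (f w).re) :
    ∫ y in a..b, (f (s + y * I)).re ≤
      2 * (Real.cosh (Real.pi / (β - α) * (t - s)) * ∫ y in α..β, ‖f (t + y * I)‖) := by
  have hcont : ContinuousOn (fun y : ℝ => (f (s + y * I)).re) (Icc α β) :=
    continuous_re.comp_continuousOn
      (continuousOn_vertical_segment hf.continuousOn (left_mem_Icc.2 hst))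
  have hre_left : ∀ y ∈ Icc α β, 0 ≤ (f (s + y * I)).re := fun y hy =>
    hre _ (by simpa [mem_reProdIm, hst] using hy)
  exact (integral_le_two_mul_integral_mul_sin hαβ hα hab hβ hcont hre_left).trans <|
    mul_le_mul_of_nonneg_left (integral_re_mul_sin_le hst hαβ hf hre) zero_le_two

end Rectangle

section Dyadic

variable {φ : ℝ → ℝ} {r M : ℝ}

theorem le_add_mul_natCast_of_le_add
    (h : ∀ s ∈ Ioc 0 r, ∀ u ∈ Icc (s / 2) s, φ u ≤ φ s + M) (n : ℕ) :
    ∀ u ∈ Ioc 0 r, r / 2 ^ n ≤ u → φ u ≤ φ r + M * n := by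
  induction n with
  | zero =>
    intro u hu hlow
    obtain rfl : u = r := le_antisymm hu.2 (by simpa using hlow)
    simp
  | succ n ih =>
    intro u hu hlow
    push_cast
    rcases le_total (2 * u) r with hur | hur
    · have hu2 : 2 * u ∈ Ioc 0 r := ⟨by linarith [hu.1], hur⟩
      have hstep : φ u ≤ φ (2 * u) + M := h (2 * u) hu2 u ⟨by linarith, by linarith [hu.1]⟩
      have hlow2 : r / 2 ^ n ≤ 2 * u :=
        calc r / 2 ^ n = 2 * (r / 2 ^ (n + 1)) := by rw [pow_succ]; field_simp
          _ ≤ 2 * u := by linarith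
      linarith [ih (2 * u) hu2 hlow2]
    · have hstep : φ u ≤ φ r + M := h r ⟨hu.1.trans_le hu.2, le_rfl⟩ u ⟨by linarith, hu.2⟩
      have hM : 0 ≤ M := by linarith [h u hu u ⟨by linarith [hu.1], le_rfl⟩]
      linarith [mul_nonneg hM n.cast_nonneg]

theorem le_add_mul_logb_of_le_add
    (h : ∀ s ∈ Ioc 0 r, ∀ u ∈ Icc (s / 2) s, φ u ≤ φ s + M) :
    ∀ u ∈ Ioc 0 r, φ u ≤ φ r + M * (Real.logb 2 (r / u) + 1) := by
  intro u hu
  have hM : 0 ≤ M := by linarith [h u hu u ⟨by linarith [hu.1], le_rfl⟩]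
  have hr : 0 < r := hu.1.trans_le hu.2
  obtain ⟨n, hn_le, hn_lt⟩ := exists_nat_pow_near ((one_le_div hu.1).2 hu.2) one_lt_two
  have hlow : r / 2 ^ (n + 1) ≤ u :=
    (div_le_iff₀' (by positivity)).2 ((div_lt_iff₀ hu.1).1 hn_lt).le
  have hn_logb : (n : ℝ) ≤ Real.logb 2 (r / u) := by
    rw [Real.le_logb_iff_rpow_le one_lt_two (div_pos hr hu.1), Real.rpow_natCast]
    exact hn_le
  calc φ u ≤ φ r + M * (n + 1 : ℕ) := le_add_mul_natCast_of_le_add h (n + 1) u hu hlow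
    _ ≤ φ r + M * (Real.logb 2 (r / u) + 1) := by
        push_cast
        gcongr

end Dyadic

section Strip

variable {p : ℂ → ℂ}

theorem continuous_vertical_line {S : Set ℝ} {x : ℝ} (hp : ContinuousOn p (re ⁻¹' S))
    (hx : x ∈ S) : Continuous fun y : ℝ => p (x + y * I) :=
  hp.comp_continuous (by fun_prop) (by simp [hx])

theorem exists_integral_re_le {a b t : ℝ} (hab : a < b)
    (hp : DifferentiableOn ℂ p (re ⁻¹' Ioc 0 t)) (hre : ∀ w ∈ re ⁻¹' Ioc 0 t, 0 ≤ (p w).re) :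
    ∃ M, 0 ≤ M ∧ ∀ s ∈ Ioc 0 t, ∫ y in a..b, (p (s + y * I)).re ≤ M := by
  set α : ℝ := a - (b - a) / 4 with hα
  set β : ℝ := b + (b - a) / 4 with hβ
  have hαβ : α < β := by linarith
  have hmid_left : α + (β - α) / 6 = a := by rw [hα, hβ]; ring
  have hmid_right : b = β - (β - α) / 6 := by rw [hα, hβ]; ring
  have hint : 0 ≤ ∫ y in α..β, ‖p (t + y * I)‖ :=
    intervalIntegral.integral_nonneg hαβ.le fun _ _ => norm_nonneg _
  refine ⟨2 * (Real.cosh (Real.pi / (β - α) * t) * ∫ y in α..β, ‖p (t + y * I)‖), by positivity,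
    fun s hs => ?_⟩
  have hrect : Icc s t ×ℂ Icc α β ⊆ re ⁻¹' Ioc 0 t := fun w hw =>
    ⟨hs.1.trans_le hw.1.1, hw.1.2⟩
  refine (integral_re_le_of_re_nonneg_on_rect hs.2 hαβ hmid_left.le hab.le hmid_right.le
    (hp.mono hrect) fun w hw => hre w (hrect hw)).trans ?_
  have hcosh : Real.cosh (Real.pi / (β - α) * (t - s)) ≤ Real.cosh (Real.pi / (β - α) * t) := by
    have hfreq : 0 ≤ Real.pi / (β - α) := div_nonneg Real.pi_pos.le (sub_nonneg.2 hαβ.le)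
    have hts : 0 ≤ t - s := sub_nonneg.2 hs.2
    rw [Real.cosh_le_cosh, abs_of_nonneg (by positivity),
      abs_of_nonneg (mul_nonneg hfreq (hs.1.le.trans hs.2))]
    gcongr
    linarith [hs.1]
  gcongr

theorem ball_subset_re_preimage_Ioo (c : ℂ) (r : ℝ) :
    Metric.ball c r ⊆ re ⁻¹' Ioo (c.re - r) (c.re + r) := by
  intro w hw
  obtain ⟨hlow, hupp⟩ := abs_lt.1 ((abs_re_le_norm (w - c)).trans_lt (mem_ball_iff_norm.1 hw))
  rw [sub_re] at hlow hupp
  exact ⟨by linarith, by linarith⟩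

theorem integral_abs_im_le_add_two_mul_integral_re {a b s u : ℝ} (hab : a ≤ b) (hs : 0 < s)
    (hp : DifferentiableOn ℂ p (re ⁻¹' Ioo 0 (2 * s)))
    (hre : ∀ w ∈ re ⁻¹' Ioo 0 (2 * s), 0 ≤ (p w).re) (hu : u ∈ Icc (s / 2) s) :
    ∫ y in a..b, |(p (u + y * I)).im| ≤
      (∫ y in a..b, |(p (s + y * I)).im|) + 2 * ∫ y in a..b, (p (s + y * I)).re := by
  have hball : ∀ y : ℝ, Metric.ball (s + y * I : ℂ) s ⊆ re ⁻¹' Ioo 0 (2 * s) := fun y => by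
    simpa [two_mul] using ball_subset_re_preimage_Ioo (s + y * I) s
  have hpt : ∀ y : ℝ, |(p (u + y * I)).im| ≤ |(p (s + y * I)).im| + 2 * (p (s + y * I)).re := by
    intro y
    refine abs_im_le_abs_im_add_two_mul_re (hp.mono (hball y))
      (fun w hw => hre w (hball y hw)) hs ?_
    rw [dist_add_right, Complex.dist_of_im_eq (by simp), ofReal_re, ofReal_re, Real.dist_eq,
      abs_le]
    exact ⟨by linarith [hu.1], by linarith [hu.2]⟩
  have hcont_u : Continuous fun y : ℝ => p (u + y * I) :=
    continuous_vertical_line hp.continuousOn ⟨by linarith [hu.1], by linarith [hu.2]⟩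
  have hcont_s : Continuous fun y : ℝ => p (s + y * I) :=
    continuous_vertical_line hp.continuousOn ⟨hs, by linarith⟩
  have hint_im : IntervalIntegrable (fun y : ℝ => |(p (s + y * I)).im|) MeasureTheory.volume a b :=
    (continuous_im.comp hcont_s).abs.intervalIntegrable a b
  have hint_re : IntervalIntegrable (fun y : ℝ => 2 * (p (s + y * I)).re)
      MeasureTheory.volume a b :=
    (continuous_const.mul (continuous_re.comp hcont_s)).intervalIntegrable a b
  rw [← intervalIntegral.integral_const_mul, ← intervalIntegral.integral_add hint_im hint_re]
  exact intervalIntegral.integral_mono hab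
    ((continuous_im.comp hcont_u).abs.intervalIntegrable a b) (hint_im.add hint_re) hpt

theorem exists_integral_abs_im_le_add_mul_logb {a b r : ℝ} (hab : a < b)
    (hp : DifferentiableOn ℂ p (re ⁻¹' Ioo 0 (2 * r)))
    (hre : ∀ w ∈ re ⁻¹' Ioo 0 (2 * r), 0 ≤ (p w).re) :
    ∃ M, 0 ≤ M ∧ ∀ u ∈ Ioc 0 r, ∫ y in a..b, |(p (u + y * I)).im| ≤
      (∫ y in a..b, |(p (r + y * I)).im|) + M * (Real.logb 2 (r / u) + 1) := by
  have hsub : re ⁻¹' Ioc 0 r ⊆ re ⁻¹' Ioo 0 (2 * r) := fun w hw =>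
    ⟨hw.1, by linarith [hw.1.trans_le hw.2, hw.2]⟩
  obtain ⟨M, hM0, hM⟩ := exists_integral_re_le hab (hp.mono hsub) fun w hw => hre w (hsub hw)
  refine ⟨2 * M, by positivity, le_add_mul_logb_of_le_add fun s hs u hu => ?_⟩
  have hsub_s : re ⁻¹' Ioo 0 (2 * s) ⊆ re ⁻¹' Ioo 0 (2 * r) := fun w hw =>
    ⟨hw.1, by linarith [hw.2, hs.2]⟩
  have hstep := integral_abs_im_le_add_two_mul_integral_re hab.le hs.1 (hp.mono hsub_s)
    (fun w hw => hre w (hsub_s hw)) hu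
  linarith [hM s hs]

theorem exists_integral_abs_im_le_neg_mul_log {a b : ℝ} (hab : a < b)
    (hp : DifferentiableOn ℂ p (re ⁻¹' Ioo 0 1)) (hre : ∀ w ∈ re ⁻¹' Ioo 0 1, 0 ≤ (p w).re) :
    ∃ C, 0 < C ∧ ∀ u ∈ Ioc (0 : ℝ) (1 / 2),
      ∫ y in a..b, |(p (u + y * I)).im| ≤ -C * Real.log u := by
  obtain ⟨M, hM0, hM⟩ := exists_integral_abs_im_le_add_mul_logb (p := p) (r := 1 / 2) hab
    (by simpa using hp) (by simpa using hre)
  set A : ℝ := ∫ y in a..b, |(p ((1 / 2 : ℝ) + y * I)).im|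
  have hA : 0 ≤ A := intervalIntegral.integral_nonneg hab.le fun _ _ => abs_nonneg _
  have hlog2 : 0 < Real.log 2 := Real.log_pos one_lt_two
  refine ⟨(A + 1 + M) / Real.log 2, by positivity, fun u hu => ?_⟩
  have hlogb : Real.logb 2 (1 / 2 / u) + 1 = -Real.log u / Real.log 2 := by
    rw [Real.logb, Real.log_div (by norm_num) hu.1.ne', one_div, Real.log_inv]
    field_simp
    ring
  have hone : 1 ≤ -Real.log u / Real.log 2 := by
    have := Real.log_le_log hu.1 hu.2
    rw [one_div, Real.log_inv] at this
    exact (one_le_div hlog2).2 (by linarith)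
  calc ∫ y in a..b, |(p (u + y * I)).im|
      ≤ A + M * (-Real.log u / Real.log 2) := hlogb ▸ hM u hu
    _ ≤ (A + 1) * (-Real.log u / Real.log 2) + M * (-Real.log u / Real.log 2) := by
        gcongr
        exact (lt_add_one A).le.trans (le_mul_of_one_le_right (by positivity) hone)
    _ = -((A + 1 + M) / Real.log 2) * Real.log u := by ring

theorem exists_integral_abs_im_le_neg_mul_log_one_sub {a b : ℝ} (hab : a < b)
    (hp : DifferentiableOn ℂ p (re ⁻¹' Ioo 0 1)) (hre : ∀ w ∈ re ⁻¹' Ioo 0 1, 0 ≤ (p w).re) :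
    ∃ C, 0 < C ∧ ∀ u ∈ Ico (1 / 2 : ℝ) 1,
      ∫ y in a..b, |(p (u + y * I)).im| ≤ -C * Real.log (1 - u) := by
  have hmaps : MapsTo (fun w : ℂ => 1 - w) (re ⁻¹' Ioo 0 1) (re ⁻¹' Ioo 0 1) := fun w hw =>
    ⟨by simpa using hw.2, by simpa using hw.1⟩
  obtain ⟨C, hC, h⟩ := exists_integral_abs_im_le_neg_mul_log (p := fun w => p (1 - w))
    (neg_lt_neg hab) (hp.comp (by fun_prop) hmaps) fun w hw => hre _ (hmaps hw)
  refine ⟨C, hC, fun u hu => ?_⟩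
  have hrefl : ∀ y : ℝ, (1 - ((1 - u : ℝ) + (-y : ℝ) * I) : ℂ) = u + y * I := fun y => by
    push_cast
    ring
  have hle := h (1 - u) ⟨by linarith [hu.2], by linarith [hu.1]⟩
  rw [← intervalIntegral.integral_comp_neg] at hle
  simpa only [hrefl] using hle

end Strip

/-- Lemma (ii): for a holomorphic function `p` with nonnegative real part on the strip
`𝕊 = {w : 0 < Re w < 1}`, the integrals of `|Im p|` over vertical segments of fixed height
are bounded by `−C log(u(1−u))`. -/
theorem strip_im_integral_log_bounded
    (p : ℂ → ℂ)
    (hp : DifferentiableOn ℂ p {w : ℂ | 0 < w.re ∧ w.re < 1})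
    (hRe : ∀ w ∈ {w : ℂ | 0 < w.re ∧ w.re < 1}, 0 ≤ (p w).re)
    (a b : ℝ) (hab : a < b) :
    ∃ C : ℝ, 0 < C ∧ ∀ u ∈ Ioo (0:ℝ) 1,
      (∫ v in a..b, |(p ((u : ℂ) + (v : ℂ) * Complex.I)).im|) ≤
        -C * Real.log (u * (1 - u)) := by
  obtain ⟨C₁, hC₁, hleft⟩ := exists_integral_abs_im_le_neg_mul_log hab hp hRe
  obtain ⟨C₂, hC₂, hright⟩ := exists_integral_abs_im_le_neg_mul_log_one_sub hab hp hRe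
  refine ⟨C₁ + C₂, by positivity, fun u hu => ?_⟩
  have hu' : 0 < 1 - u := sub_pos.2 hu.2
  have hlog : 0 < -Real.log u := neg_pos.2 (Real.log_neg hu.1 hu.2)
  have hlog' : 0 < -Real.log (1 - u) := neg_pos.2 (Real.log_neg hu' (by linarith [hu.1]))
  have hsplit : -(C₁ + C₂) * Real.log (u * (1 - u)) =
      C₁ * -Real.log u + C₂ * -Real.log (1 - u) +
        (C₂ * -Real.log u + C₁ * -Real.log (1 - u)) := by
    rw [Real.log_mul hu.1.ne' hu'.ne']
    ring
  have hcross : 0 ≤ C₂ * -Real.log u + C₁ * -Real.log (1 - u) := by positivity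
  rcases le_total u (1 / 2) with h | h
  · linarith [hleft u ⟨hu.1, h⟩, mul_pos hC₂ hlog']
  · linarith [hright u ⟨h, hu.2⟩, mul_pos hC₁ hlog]
end

section
/- Let r ∈ (0,1) and ρ ∈ (r,1). Then the maximum over θ ∈ ℝ of Re K_r(e^{iθ}ρ) equals K_r(ρ) > 1, and the minimum over θ ∈ ℝ of Re K_r(e^{iθ}ρ) equals K_r(−ρ) ∈ (0,1). Moreover x ↦ K_r(x) is increasing on [r,1) with K_r(r) = 1. -/
open Complex Set

/-- The Villat kernel `K_r(z) = 1 + 2 ∑_{k≥1} (z^k − r^{2k} z^{−k})/(1 − r^{2k})`. -/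
noncomputable def villatK (r : ℝ) (z : ℂ) : ℂ :=
  1 + 2 * ∑' k : ℕ,
    ((z ^ (k + 1) - (r : ℂ) ^ (2 * (k + 1)) * z⁻¹ ^ (k + 1)) /
      (1 - (r : ℂ) ^ (2 * (k + 1))))

/-!
With `S(z) = ∑_{k≥1} z^k / (1 - r^{2k})`, the kernel is `K_r(z) = 1 + 2 (S(z) - S(r² / z))`. As `S`
commutes with conjugation, `Re K_r = 1` on `|z| = r`, where `r² / z` is the conjugate of `z`.

The functional equation `S(z) = z / (1 - z) + S(r² z)`, iterated, shows that `S` is strictly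
increasing on `(-1, 1)`; this gives all the claims about real arguments. Applied once, it splits off
the principal part `(1 + z) / (1 - z)` of `K_r`, leaving a function that is holomorphic across
`|z| = 1` with vanishing real part there.

On each circle `Re K_r(z)` increases with `Re z`: for `|b| = 1` the maximum principle applies to
`Re (K_r(b w) - K_r(w))` on the part of `r < |w| < 1` where `Re (b w) < Re w`. The boundary values
vanish on `|w| = r`, and on the line `Re (b w) = Re w` because `b w` is there `w` or its conjugate;
near `|w| = 1` only the principal parts matter, and those are compared explicitly.
-/

open Bornology Filter Topology
open scoped ComplexConjugate

section MaximumPrinciple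

variable {E F : Type*} [NormedAddCommGroup E] [NormedSpace ℂ E] [Nontrivial E]
  {U : Set E} {C : ℝ}

theorem norm_le_of_forall_mem_frontier_eventually_norm_le [NormedAddCommGroup F]
    [NormedSpace ℂ F] {f : E → F} (hUb : IsBounded U) (hUo : IsOpen U)
    (hf : DifferentiableOn ℂ f U)
    (hC : ∀ ζ ∈ frontier U, ∀ C' > C, ∀ᶠ w in 𝓝[U] ζ, ‖f w‖ ≤ C') {z : E} (hz : z ∈ U) :
    ‖f z‖ ≤ C := by
  refine le_of_forall_gt_imp_ge_of_dense fun C' hC' => ?_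
  by_contra! hzC'
  set V : Set E := U ∩ {w | C' < ‖f w‖}
  have hVo : IsOpen V := hf.continuousOn.norm.isOpen_inter_preimage hUo isOpen_Ioi
  have hVU : closure V ⊆ U := by
    intro ζ hζ
    by_contra hζU
    have hζU' : ζ ∈ frontier U :=
      hUo.frontier_eq ▸ ⟨closure_mono inter_subset_left hζ, hζU⟩
    have : (𝓝[V] ζ).NeBot := mem_closure_iff_nhdsWithin_neBot.1 hζ
    have hle : ∀ᶠ w in 𝓝[V] ζ, ‖f w‖ ≤ C' :=
      (hC ζ hζU' C' hC').filter_mono (nhdsWithin_mono ζ inter_subset_left)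
    obtain ⟨w, hw, hwV⟩ := (hle.and self_mem_nhdsWithin).exists
    exact hw.not_gt hwV.2
  have hfrontier : ∀ w ∈ frontier V, ‖f w‖ ≤ C' := by
    intro w hw
    rw [hVo.frontier_eq] at hw
    exact not_lt.1 fun h => hw.2 ⟨hVU hw.1, h⟩
  exact hzC'.not_ge (norm_le_of_forall_mem_frontier_norm_le (hUb.subset inter_subset_left)
    (hf.mono hVU).diffContOnCl hfrontier (subset_closure ⟨hz, hzC'⟩))

theorem re_le_of_forall_mem_frontier_eventually_re_le {f : E → ℂ} (hUb : IsBounded U)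
    (hUo : IsOpen U) (hf : DifferentiableOn ℂ f U)
    (hC : ∀ ζ ∈ frontier U, ∀ C' > C, ∀ᶠ w in 𝓝[U] ζ, (f w).re ≤ C') {z : E} (hz : z ∈ U) :
    (f z).re ≤ C := by
  rw [← Real.exp_le_exp, ← norm_exp]
  refine norm_le_of_forall_mem_frontier_eventually_norm_le hUb hUo hf.cexp
    (fun ζ hζ C' hC' => ?_) hz
  have hC'0 : 0 < C' := (Real.exp_pos C).trans hC'
  filter_upwards [hC ζ hζ (Real.log C') ((Real.lt_log_iff_exp_lt hC'0).2 hC')] with w hw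
  rwa [norm_exp, ← Real.le_log_iff_exp_le hC'0]

end MaximumPrinciple

theorem eq_or_eq_conj_of_norm_eq_of_re_eq {z w : ℂ} (hnorm : ‖z‖ = ‖w‖) (hre : z.re = w.re) :
    z = w ∨ z = conj w := by
  have him : z.im ^ 2 = w.im ^ 2 := by
    rw [← sq_norm_sub_sq_re, ← sq_norm_sub_sq_re, hnorm, hre]
  rcases sq_eq_sq_iff_eq_or_eq_neg.1 him with h | h
  · exact .inl (Complex.ext hre h)
  · exact .inr (Complex.ext hre h)

theorem one_sub_ne_zero_of_norm_lt_one {R : Type*} [NormedRing R] [NormOneClass R] {x : R}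
    (hx : ‖x‖ < 1) : 1 - x ≠ 0 :=
  sub_ne_zero.2 fun h => by simp [← h] at hx

theorem summable_pow_succ_of_norm_lt_one {R : Type*} [NormedRing R] [HasSummableGeomSeries R]
    {x : R} (hx : ‖x‖ < 1) : Summable fun k : ℕ => x ^ (k + 1) :=
  (summable_nat_add_iff 1).2 (summable_geometric_of_norm_lt_one hx)

theorem one_sub_ofReal_pow_succ_ne_zero {q : ℝ} (hq : |q| < 1) (k : ℕ) :
    1 - (q : ℂ) ^ (k + 1) ≠ 0 :=
  one_sub_ne_zero_of_norm_lt_one <| by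
    simpa using pow_lt_one₀ (abs_nonneg q) hq k.succ_ne_zero

theorem re_one_add_div_one_sub (z : ℂ) :
    ((1 + z) / (1 - z)).re = (1 - ‖z‖ ^ 2) / (1 + ‖z‖ ^ 2 - 2 * z.re) := by
  have h := congrFun (poissonKernel_eq_re_herglotzRieszKernel (c := 0) (w := z)) 1
  have hnorm : ‖1 - z‖ ^ 2 = 1 + ‖z‖ ^ 2 - 2 * z.re := by
    simp [← normSq_eq_norm_sq, normSq_sub]
  simpa [poissonKernel_def, herglotzRieszKernel_def, hnorm] using h.symm

theorem re_one_add_div_one_sub_le {z w : ℂ} (hw : ‖w‖ < 1) (hnorm : ‖z‖ = ‖w‖)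
    (hre : z.re ≤ w.re) : ((1 + z) / (1 - z)).re ≤ ((1 + w) / (1 - w)).re := by
  rw [re_one_add_div_one_sub, re_one_add_div_one_sub, hnorm]
  have hnum : 0 ≤ 1 - ‖w‖ ^ 2 := by nlinarith [norm_nonneg w]
  have hden : 0 < 1 + ‖w‖ ^ 2 - 2 * w.re := by nlinarith [re_le_norm w]
  gcongr

theorem monotoneOn_of_eq_add_comp_mul {q : ℝ} (hq0 : 0 ≤ q) (hq : q < 1) {f g : ℝ → ℝ}
    {s : Set ℝ} (hs : MapsTo (q * ·) s s) (hfg : ∀ x ∈ s, f x = g x + f (q * x))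
    (hg : MonotoneOn g s) (hf : ContinuousAt f 0) : MonotoneOn f s := by
  intro x hx y hy hxy
  have hmem (t : ℝ) (ht : t ∈ s) (n : ℕ) : q ^ n * t ∈ s := by
    induction n with
    | zero => simpa using ht
    | succ n ih => simpa only [pow_succ', mul_assoc] using hs ih
  have hanti : Antitone fun n : ℕ => f (q ^ n * y) - f (q ^ n * x) := by
    refine antitone_nat_of_succ_le fun n => ?_
    have hle : g (q ^ n * x) ≤ g (q ^ n * y) := hg (hmem x hx n) (hmem y hy n) (by gcongr)
    simp only [hfg _ (hmem x hx n), hfg _ (hmem y hy n), pow_succ', mul_assoc]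
    linarith
  have hlim (t : ℝ) : Tendsto (fun n : ℕ => f (q ^ n * t)) atTop (𝓝 (f 0)) := by
    have h := (tendsto_pow_atTop_nhds_zero_of_lt_one hq0 hq).mul_const t
    rw [zero_mul] at h
    exact hf.tendsto.comp h
  have h := hanti.le_of_tendsto ((hlim y).sub (hlim x)) 0
  simpa using h

theorem strictMonoOn_div_one_sub : StrictMonoOn (fun x : ℝ => x / (1 - x)) (Iio 1) := by
  intro x hx y hy hxy
  have hx' : 0 < 1 - x := sub_pos.2 hx
  have hy' : 0 < 1 - y := sub_pos.2 hy
  simp only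
  rw [div_lt_div_iff₀ hx' hy']
  linarith

theorem mapsTo_mul_left_Ioo {q : ℝ} (hq : |q| < 1) :
    MapsTo (q * ·) (Ioo (-1) 1) (Ioo (-1) 1) := by
  intro x hx
  rw [mem_Ioo, ← abs_lt, abs_mul]
  exact mul_lt_one_of_nonneg_of_lt_one_left (abs_nonneg q) hq (abs_lt.2 hx).le

/-- The Lambert series `S_q(z) = ∑_{k≥1} z^k / (1 - q^k)`, summed from `k = 0` after an index
shift. -/
noncomputable def lambertSeries (q : ℝ) (z : ℂ) : ℂ :=
  ∑' k : ℕ, z ^ (k + 1) / (1 - (q : ℂ) ^ (k + 1))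

section LambertSeries

variable {q : ℝ} {z : ℂ}

theorem norm_lambertSeries_term_le (hq : |q| < 1) {s : ℝ} (hz : ‖z‖ ≤ s) (k : ℕ) :
    ‖z ^ (k + 1) / (1 - (q : ℂ) ^ (k + 1))‖ ≤ s ^ (k + 1) / (1 - |q|) := by
  have hden : 1 - |q| ≤ ‖1 - (q : ℂ) ^ (k + 1)‖ :=
    calc 1 - |q| ≤ 1 - |q| ^ (k + 1) :=
          sub_le_sub_left (pow_le_of_le_one (abs_nonneg q) hq.le k.succ_ne_zero) 1
      _ = ‖(1 : ℂ)‖ - ‖(q : ℂ) ^ (k + 1)‖ := by simp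
      _ ≤ ‖1 - (q : ℂ) ^ (k + 1)‖ := norm_sub_norm_le _ _
  rw [norm_div, norm_pow]
  exact div_le_div₀ (pow_nonneg ((norm_nonneg z).trans hz) _)
    (pow_le_pow_left₀ (norm_nonneg z) hz _) (sub_pos.2 hq) hden

theorem summable_lambertSeries_term (hq : |q| < 1) (hz : ‖z‖ < 1) :
    Summable fun k : ℕ => z ^ (k + 1) / (1 - (q : ℂ) ^ (k + 1)) := by
  have hnorm : ‖‖z‖‖ < 1 := by rwa [norm_norm]
  exact ((summable_pow_succ_of_norm_lt_one hnorm).div_const (1 - |q|)).of_norm_bounded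
    fun k => norm_lambertSeries_term_le hq le_rfl k

theorem differentiableAt_lambertSeries (hq : |q| < 1) (hz : ‖z‖ < 1) :
    DifferentiableAt ℂ (lambertSeries q) z := by
  obtain ⟨s, hzs, hs⟩ := exists_between hz
  have hs' : ‖s‖ < 1 := by rwa [Real.norm_of_nonneg ((norm_nonneg z).trans hzs.le)]
  have hdiff : DifferentiableOn ℂ (lambertSeries q) (Metric.ball 0 s) :=
    differentiableOn_tsum_of_summable_norm
      ((summable_pow_succ_of_norm_lt_one hs').div_const _) (fun k => by fun_prop)
      Metric.isOpen_ball fun k w hw => norm_lambertSeries_term_le hq (mem_ball_zero_iff.1 hw).le k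
  exact hdiff.differentiableAt (Metric.isOpen_ball.mem_nhds (mem_ball_zero_iff.2 hzs))

theorem conj_lambertSeries (q : ℝ) (z : ℂ) :
    conj (lambertSeries q z) = lambertSeries q (conj z) := by
  simp [lambertSeries, conj_tsum]

theorem lambertSeries_eq_div_add (hq : |q| < 1) (hz : ‖z‖ < 1) :
    lambertSeries q z = z / (1 - z) + lambertSeries q (q * z) := by
  have hqz : ‖(q : ℂ) * z‖ < 1 := by
    rw [norm_mul, norm_real]
    exact mul_lt_one_of_nonneg_of_lt_one_left (norm_nonneg _) hq hz.le
  have hgeom : ∑' k : ℕ, z ^ (k + 1) = z / (1 - z) := by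
    rw [geom_series_succ z hz, tsum_geometric_of_norm_lt_one hz]
    field_simp [one_sub_ne_zero_of_norm_lt_one hz]
    ring
  have hterm (k : ℕ) : z ^ (k + 1) / (1 - (q : ℂ) ^ (k + 1)) =
      z ^ (k + 1) + (q * z) ^ (k + 1) / (1 - (q : ℂ) ^ (k + 1)) := by
    rw [mul_pow]
    field_simp [one_sub_ofReal_pow_succ_ne_zero hq k]
    ring
  rw [lambertSeries, tsum_congr hterm, (summable_pow_succ_of_norm_lt_one hz).tsum_add
    (summable_lambertSeries_term hq hqz), hgeom, lambertSeries]

theorem re_lambertSeries_ofReal_eq_div_add (hq : |q| < 1) {x : ℝ} (hx : x ∈ Ioo (-1) 1) :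
    (lambertSeries q x).re = x / (1 - x) + (lambertSeries q (q * x : ℝ)).re := by
  rw [lambertSeries_eq_div_add hq (by simpa [abs_lt] using hx), add_re, ← ofReal_mul]
  congr 1
  exact_mod_cast ofReal_re (x / (1 - x))

theorem strictMonoOn_re_lambertSeries (hq0 : 0 ≤ q) (hq : q < 1) :
    StrictMonoOn (fun x : ℝ => (lambertSeries q x).re) (Ioo (-1) 1) := by
  have hq' : |q| < 1 := by rwa [abs_of_nonneg hq0]
  have hmaps := mapsTo_mul_left_Ioo hq'
  have hdiv : StrictMonoOn (fun x : ℝ => x / (1 - x)) (Ioo (-1) 1) :=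
    strictMonoOn_div_one_sub.mono Ioo_subset_Iio_self
  have hcont : ContinuousAt (fun x : ℝ => (lambertSeries q x).re) 0 := by
    have h : ContinuousAt (lambertSeries q) ((0 : ℝ) : ℂ) :=
      (differentiableAt_lambertSeries hq' (by simp)).continuousAt
    exact continuous_re.continuousAt.comp (h.comp continuous_ofReal.continuousAt)
  have hmono : MonotoneOn (fun x : ℝ => (lambertSeries q x).re) (Ioo (-1) 1) :=
    monotoneOn_of_eq_add_comp_mul hq0 hq hmaps (fun _ => re_lambertSeries_ofReal_eq_div_add hq')
      hdiv.monotoneOn hcont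
  intro x hx y hy hxy
  have hle := hmono (hmaps hx) (hmaps hy) (mul_le_mul_of_nonneg_left hxy.le hq0)
  simp only [re_lambertSeries_ofReal_eq_div_add hq' hx, re_lambertSeries_ofReal_eq_div_add hq' hy]
  exact add_lt_add_of_lt_of_le (hdiv hx hy hxy) hle

end LambertSeries

section VillatKernel

variable {r : ℝ} {z : ℂ}

theorem sq_lt_self_of_mem_Ioo (hr : r ∈ Ioo 0 1) : r ^ 2 < r :=
  pow_lt_self_of_lt_one₀ hr.1 hr.2 one_lt_two

theorem norm_sq_div_lt_one (hrz : r ^ 2 < ‖z‖) : ‖(r : ℂ) ^ 2 / z‖ < 1 := by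
  simpa using (div_lt_one ((sq_nonneg r).trans_lt hrz)).2 hrz

theorem villatK_eq_lambertSeries (hrz : r ^ 2 < ‖z‖) (hz : ‖z‖ < 1) :
    villatK r z = 1 + 2 * (lambertSeries (r ^ 2) z - lambertSeries (r ^ 2) (r ^ 2 / z)) := by
  have hq : |r ^ 2| < 1 := (abs_sq r).trans_lt (hrz.trans hz)
  rw [lambertSeries, lambertSeries, ← (summable_lambertSeries_term hq hz).tsum_sub
    (summable_lambertSeries_term hq (norm_sq_div_lt_one hrz)), villatK]
  simp only [ofReal_pow, pow_mul, div_pow, inv_pow, ← sub_div, div_eq_mul_inv (_ ^ _) (z ^ _)]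

theorem conj_villatK (r : ℝ) (z : ℂ) : conj (villatK r z) = villatK r (conj z) := by
  simp [villatK, conj_tsum, map_ofNat]

theorem re_villatK_conj (r : ℝ) (z : ℂ) : (villatK r (conj z)).re = (villatK r z).re := by
  rw [← conj_villatK, conj_re]

theorem re_villatK_congr {w : ℂ} (hnorm : ‖z‖ = ‖w‖) (hre : z.re = w.re) :
    (villatK r z).re = (villatK r w).re := by
  rcases eq_or_eq_conj_of_norm_eq_of_re_eq hnorm hre with rfl | rfl
  · rfl
  · exact re_villatK_conj r w

theorem re_villatK_eq_one_of_norm_eq (hr : r ∈ Ioo 0 1) (hz : ‖z‖ = r) :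
    (villatK r z).re = 1 := by
  have hz0 : z ≠ 0 := norm_pos_iff.1 (hz ▸ hr.1)
  have hrefl : (r : ℂ) ^ 2 / z = conj z := by
    rw [div_eq_iff hz0, conj_mul', hz]
  rw [villatK_eq_lambertSeries ((sq_lt_self_of_mem_Ioo hr).trans_eq hz.symm)
    (hz.trans_lt hr.2), hrefl, ← conj_lambertSeries]
  simp

/-- What is left of the Villat kernel `K_r(z)` after removing its principal part
`(1 + z) / (1 - z)`; it extends analytically across the unit circle, to `r² < |z| < r⁻²`. -/
noncomputable def villatRegularPart (r : ℝ) (z : ℂ) : ℂ :=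
  2 * (lambertSeries (r ^ 2) (r ^ 2 * z) - lambertSeries (r ^ 2) (r ^ 2 / z))

theorem villatK_eq_add_villatRegularPart (hrz : r ^ 2 < ‖z‖) (hz : ‖z‖ < 1) :
    villatK r z = (1 + z) / (1 - z) + villatRegularPart r z := by
  rw [villatK_eq_lambertSeries hrz hz,
    lambertSeries_eq_div_add ((abs_sq r).trans_lt (hrz.trans hz)) hz, villatRegularPart, ofReal_pow]
  field_simp [one_sub_ne_zero_of_norm_lt_one hz]
  ring

theorem differentiableAt_villatRegularPart (hrz : r ^ 2 < ‖z‖) (hz : r ^ 2 * ‖z‖ < 1) :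
    DifferentiableAt ℂ (villatRegularPart r) z := by
  have hq : |r ^ 2| < 1 := by
    rw [abs_sq]
    nlinarith [sq_nonneg r]
  have hz0 : z ≠ 0 := norm_pos_iff.1 ((sq_nonneg r).trans_lt hrz)
  have hmul : DifferentiableAt ℂ (fun w => lambertSeries (r ^ 2) (r ^ 2 * w)) z :=
    (differentiableAt_lambertSeries hq (by simpa using hz)).comp (g := lambertSeries (r ^ 2)) z
      (by fun_prop)
  have hdiv : DifferentiableAt ℂ (fun w => lambertSeries (r ^ 2) (r ^ 2 / w)) z :=
    (differentiableAt_lambertSeries hq (norm_sq_div_lt_one hrz)).comp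
      (g := lambertSeries (r ^ 2)) z (by fun_prop (disch := assumption))
  exact (hmul.sub hdiv).const_mul 2

theorem re_villatRegularPart_of_norm_eq_one (r : ℝ) (hz : ‖z‖ = 1) :
    (villatRegularPart r z).re = 0 := by
  have hrefl : (r : ℂ) ^ 2 / z = conj ((r : ℂ) ^ 2 * z) := by
    rw [div_eq_mul_inv, inv_eq_conj hz, map_mul, map_pow, conj_ofReal]
  rw [villatRegularPart, hrefl, ← conj_lambertSeries]
  simp

theorem differentiableAt_villatK (hrz : r ^ 2 < ‖z‖) (hz : ‖z‖ < 1) :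
    DifferentiableAt ℂ (villatK r) z := by
  have hreg : DifferentiableAt ℂ (fun w => (1 + w) / (1 - w) + villatRegularPart r w) z :=
    (DifferentiableAt.div (by fun_prop) (by fun_prop) (one_sub_ne_zero_of_norm_lt_one hz)).add
      (differentiableAt_villatRegularPart hrz (by nlinarith [sq_nonneg r]))
  refine hreg.congr_of_eventuallyEq ?_
  filter_upwards [continuous_norm.continuousAt.eventually (Ioo_mem_nhds hrz hz)] with w hw
  exact villatK_eq_add_villatRegularPart hw.1 hw.2

/-- The points `w` of the annulus `r < |w| < 1` that multiplication by `b` moves to the left. For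
`|b| = 1` this is empty or half of the annulus, cut off by a line through the origin. -/
def leftRotatedAnnulus (r : ℝ) (b : ℂ) : Set ℂ :=
  {w | ‖w‖ ∈ Ioo r 1 ∧ (b * w).re < w.re}

theorem isOpen_leftRotatedAnnulus (r : ℝ) (b : ℂ) : IsOpen (leftRotatedAnnulus r b) :=
  (isOpen_Ioo.preimage continuous_norm).inter (isOpen_lt (by fun_prop) continuous_re)

theorem isBounded_leftRotatedAnnulus (r : ℝ) (b : ℂ) : IsBounded (leftRotatedAnnulus r b) :=
  Metric.isBounded_ball.subset fun _ hw => mem_ball_zero_iff.2 hw.1.2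

theorem closure_leftRotatedAnnulus_subset (r : ℝ) (b : ℂ) :
    closure (leftRotatedAnnulus r b) ⊆ {w | ‖w‖ ∈ Icc r 1 ∧ (b * w).re ≤ w.re} :=
  closure_minimal (fun _ hw => ⟨Ioo_subset_Icc_self hw.1, hw.2.le⟩)
    ((isClosed_Icc.preimage continuous_norm).inter (isClosed_le (by fun_prop) continuous_re))

section Rotation

variable {b ζ : ℂ}

theorem differentiableAt_villatK_mul_sub (hb : ‖b‖ = 1) (hrz : r ^ 2 < ‖z‖) (hz : ‖z‖ < 1) :
    DifferentiableAt ℂ (fun w => villatK r (b * w) - villatK r w) z := by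
  have hbz : ‖b * z‖ = ‖z‖ := by rw [norm_mul, hb, one_mul]
  have hmul : DifferentiableAt ℂ (fun w => villatK r (b * w)) z :=
    (differentiableAt_villatK (hbz ▸ hrz) (hbz ▸ hz)).comp (g := villatK r) z (by fun_prop)
  exact hmul.sub (differentiableAt_villatK hrz hz)

theorem re_villatK_mul_sub_eq_zero (hr : r ∈ Ioo 0 1) (hb : ‖b‖ = 1)
    (hζ : ζ ∈ frontier (leftRotatedAnnulus r b)) (hζ1 : ‖ζ‖ < 1) :
    (villatK r (b * ζ) - villatK r ζ).re = 0 := by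
  have hbζ : ‖b * ζ‖ = ‖ζ‖ := by rw [norm_mul, hb, one_mul]
  rw [(isOpen_leftRotatedAnnulus r b).frontier_eq] at hζ
  obtain ⟨⟨hrζ, -⟩, hre⟩ := closure_leftRotatedAnnulus_subset r b hζ.1
  rw [sub_re, sub_eq_zero]
  rcases hrζ.eq_or_lt with hrζ | hrζ
  · rw [re_villatK_eq_one_of_norm_eq hr hrζ.symm,
      re_villatK_eq_one_of_norm_eq hr (hbζ.trans hrζ.symm)]
  · exact re_villatK_congr hbζ (hre.antisymm (not_lt.1 fun h => hζ.2 ⟨⟨hrζ, hζ1⟩, h⟩))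

-- `K_r` has a pole at `1`, so the comparison is made on its explicit principal part, the regular
-- part having vanishing real part on the unit circle.
theorem eventually_re_villatK_mul_sub_le (hr : r ∈ Ioo 0 1) (hb : ‖b‖ = 1) (hζ : ‖ζ‖ = 1)
    {ε : ℝ} (hε : 0 < ε) :
    ∀ᶠ w in 𝓝[leftRotatedAnnulus r b] ζ, (villatK r (b * w) - villatK r w).re ≤ ε := by
  have hnorm (w : ℂ) : ‖b * w‖ = ‖w‖ := by rw [norm_mul, hb, one_mul]
  have hr2 : r ^ 2 < 1 := (sq_lt_self_of_mem_Ioo hr).trans hr.2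
  have hreg {w : ℂ} (hw : ‖w‖ = 1) : ContinuousAt (villatRegularPart r) w :=
    (differentiableAt_villatRegularPart (by rwa [hw]) (by rwa [hw, mul_one])).continuousAt
  have hlim : Tendsto (fun w => (villatRegularPart r (b * w) - villatRegularPart r w).re)
      (𝓝 ζ) (𝓝 0) := by
    have hmul : ContinuousAt (fun w => villatRegularPart r (b * w)) ζ :=
      (hreg ((hnorm ζ).trans hζ)).comp (f := (b * ·)) (by fun_prop)
    have hzero : (villatRegularPart r (b * ζ) - villatRegularPart r ζ).re = 0 := by
      rw [sub_re, re_villatRegularPart_of_norm_eq_one r ((hnorm ζ).trans hζ),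
        re_villatRegularPart_of_norm_eq_one r hζ, sub_zero]
    rw [← hzero]
    exact continuous_re.continuousAt.comp (hmul.sub (hreg hζ))
  filter_upwards [self_mem_nhdsWithin,
    (hlim.eventually_le_const hε).filter_mono nhdsWithin_le_nhds] with w ⟨⟨hrw, hw1⟩, hre⟩ hle
  have hrw' : r ^ 2 < ‖w‖ := (sq_lt_self_of_mem_Ioo hr).trans hrw
  have hprincipal := re_one_add_div_one_sub_le hw1 (hnorm w) hre.le
  rw [villatK_eq_add_villatRegularPart hrw' hw1,
    villatK_eq_add_villatRegularPart (by rwa [hnorm]) (by rwa [hnorm])]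
  simp only [add_re, sub_re] at hle ⊢
  linarith

theorem re_villatK_mul_le (hr : r ∈ Ioo 0 1) (hb : ‖b‖ = 1) (hz : z ∈ leftRotatedAnnulus r b) :
    (villatK r (b * z)).re ≤ (villatK r z).re := by
  have hsq {w : ℂ} (hw : r ≤ ‖w‖) : r ^ 2 < ‖w‖ := (sq_lt_self_of_mem_Ioo hr).trans_le hw
  rw [← sub_nonpos, ← sub_re]
  refine re_le_of_forall_mem_frontier_eventually_re_le (isBounded_leftRotatedAnnulus r b)
    (isOpen_leftRotatedAnnulus r b) (f := fun w => villatK r (b * w) - villatK r w)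
    (fun w hw => (differentiableAt_villatK_mul_sub hb (hsq hw.1.1.le)
      hw.1.2).differentiableWithinAt) (fun ζ hζ ε hε => ?_) hz
  obtain ⟨⟨hrζ, hζ1⟩, -⟩ := closure_leftRotatedAnnulus_subset r b hζ.1
  rcases hζ1.eq_or_lt with hζ1 | hζ1
  · exact eventually_re_villatK_mul_sub_le hr hb hζ1 hε
  · have hcont := continuous_re.continuousAt.comp
      (differentiableAt_villatK_mul_sub hb (hsq hrζ) hζ1).continuousAt
    refine (hcont.eventually_le_const ?_).filter_mono nhdsWithin_le_nhds
    simpa only [Function.comp_apply, re_villatK_mul_sub_eq_zero hr hb hζ hζ1] using hε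

end Rotation

theorem re_villatK_le_of_norm_eq_of_re_le {w : ℂ} (hr : r ∈ Ioo 0 1) (hw : ‖w‖ ∈ Ioo r 1)
    (hnorm : ‖z‖ = ‖w‖) (hre : z.re ≤ w.re) : (villatK r z).re ≤ (villatK r w).re := by
  rcases hre.eq_or_lt with hre | hre
  · exact (re_villatK_congr hnorm hre).le
  have hw0 : w ≠ 0 := norm_pos_iff.1 (hr.1.trans hw.1)
  have hb : ‖z / w‖ = 1 := by rw [norm_div, hnorm, div_self (norm_ne_zero_iff.2 hw0)]
  have hzw : z / w * w = z := div_mul_cancel₀ z hw0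
  simpa only [hzw] using re_villatK_mul_le hr hb ⟨hw, by rwa [hzw]⟩

theorem sq_div_mem_Ioo {x : ℝ} (hrx : r ^ 2 < |x|) : r ^ 2 / x ∈ Ioo (-1) 1 := by
  rw [mem_Ioo, ← abs_lt, abs_div, abs_sq]
  exact (div_lt_one ((sq_nonneg r).trans_lt hrx)).2 hrx

theorem re_villatK_ofReal {x : ℝ} (hrx : r ^ 2 < |x|) (hx : |x| < 1) :
    (villatK r x).re =
      1 + 2 * ((lambertSeries (r ^ 2) x).re - (lambertSeries (r ^ 2) (r ^ 2 / x : ℝ)).re) := by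
  rw [villatK_eq_lambertSeries (by simpa using hrx) (by simpa using hx)]
  simp

theorem strictMonoOn_re_villatK (r : ℝ) :
    StrictMonoOn (fun x : ℝ => (villatK r x).re) (Ioo (r ^ 2) 1) := by
  intro x hx y hy hxy
  have hx0 : 0 < x := (sq_nonneg r).trans_lt hx.1
  have hy0 : 0 < y := hx0.trans hxy
  have hrx : r ^ 2 < |x| := by rw [abs_of_pos hx0]; exact hx.1
  have hry : r ^ 2 < |y| := by rw [abs_of_pos hy0]; exact hy.1
  have hS := strictMonoOn_re_lambertSeries (sq_nonneg r) (hx.1.trans hx.2)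
  have hlt := hS ⟨by linarith, hx.2⟩ ⟨by linarith, hy.2⟩ hxy
  have hle := hS.monotoneOn (sq_div_mem_Ioo hry) (sq_div_mem_Ioo hrx) (by gcongr)
  simp only [re_villatK_ofReal hrx (by rw [abs_of_pos hx0]; exact hx.2),
    re_villatK_ofReal hry (by rw [abs_of_pos hy0]; exact hy.2)]
  linarith

theorem re_villatK_ofReal_lt_one {x : ℝ} (hr : 0 ≤ r) (hx : x ∈ Ioo (-1) (-r)) :
    (villatK r x).re < 1 := by
  have hx0 : x < 0 := by linarith [hx.2]
  have hrx : r ^ 2 < |x| := by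
    rw [abs_of_neg hx0]
    nlinarith [hx.1, hx.2]
  have hx1 : |x| < 1 := by rw [abs_of_neg hx0]; exact neg_lt.1 hx.1
  have hlt : x < r ^ 2 / x := by
    rw [lt_div_iff_of_neg hx0]
    nlinarith [hx.2]
  have hS := strictMonoOn_re_lambertSeries (sq_nonneg r) (hrx.trans hx1) (abs_lt.1 hx1)
    (sq_div_mem_Ioo hrx) hlt
  rw [re_villatK_ofReal hrx hx1]
  linarith

theorem re_villatK_ofReal_pos {x : ℝ} (hx : x ∈ Ioo (-1) (-r ^ 2)) : 0 < (villatK r x).re := by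
  have hr2 : 0 ≤ r ^ 2 := sq_nonneg r
  have hx0 : x < 0 := by linarith [hx.2]
  have hrx : r ^ 2 < |x| := by rw [abs_of_neg hx0]; exact lt_neg_of_lt_neg hx.2
  have hx1 : |x| < 1 := by rw [abs_of_neg hx0]; exact neg_lt.1 hx.1
  have hq : |r ^ 2| < 1 := (abs_sq r).trans_lt (hrx.trans hx1)
  have hle : r ^ 2 / x ≤ r ^ 2 * x := by
    rw [div_le_iff_of_neg hx0, mul_assoc]
    exact mul_le_of_le_one_right hr2 (by nlinarith [hx.1])
  have hS := (strictMonoOn_re_lambertSeries hr2 (hrx.trans hx1)).monotoneOn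
    (sq_div_mem_Ioo hrx) (mapsTo_mul_left_Ioo hq (abs_lt.1 hx1)) hle
  have hprincipal : 0 < 1 + 2 * (x / (1 - x)) := by
    have h1x : 0 < 1 - x := by linarith
    rw [show 1 + 2 * (x / (1 - x)) = (1 + x) / (1 - x) by field_simp; ring]
    exact div_pos (by linarith [hx.1]) h1x
  rw [re_villatK_ofReal hrx hx1, re_lambertSeries_ofReal_eq_div_add hq (abs_lt.1 hx1)]
  linarith

theorem villatK_self (hr : r ∈ Ioo 0 1) : villatK r r = 1 := by
  have hnorm : ‖(r : ℂ)‖ = r := by rw [norm_real, Real.norm_of_nonneg hr.1.le]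
  rw [villatK_eq_lambertSeries (by rw [hnorm]; exact sq_lt_self_of_mem_Ioo hr)
    (by rw [hnorm]; exact hr.2), sq (r : ℂ), mul_self_div_self, sub_self, mul_zero, add_zero]

end VillatKernel

/-- On each circle `|z| = ρ` (with `r < ρ < 1`) the maximum of `Re K_r` is `K_r(ρ) > 1`,
its minimum is `K_r(−ρ) ∈ (0,1)`; moreover `x ↦ K_r(x)` is increasing on `[r,1)` and
`K_r(r) = 1`. -/
theorem villat_kernel_re_extrema
    (r : ℝ) (hr : r ∈ Ioo (0:ℝ) 1) (ρ : ℝ) (hρ : ρ ∈ Ioo r 1) :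
    (∀ θ : ℝ,
        (villatK r (Complex.exp ((θ : ℂ) * Complex.I) * (ρ : ℂ))).re ≤
          (villatK r ((ρ : ℝ) : ℂ)).re) ∧
    (∀ θ : ℝ,
        (villatK r (((-ρ : ℝ) : ℂ))).re ≤
          (villatK r (Complex.exp ((θ : ℂ) * Complex.I) * (ρ : ℂ))).re) ∧
    1 < (villatK r ((ρ : ℝ) : ℂ)).re ∧
    0 < (villatK r (((-ρ : ℝ) : ℂ))).re ∧
    (villatK r (((-ρ : ℝ) : ℂ))).re < 1 ∧
    StrictMonoOn (fun x : ℝ => (villatK r ((x : ℝ) : ℂ)).re) (Ico r 1) ∧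
    villatK r ((r : ℝ) : ℂ) = 1 := by
  have hρ0 : 0 < ρ := hr.1.trans hρ.1
  have hr2 : r ^ 2 < r := sq_lt_self_of_mem_Ioo hr
  have hself : villatK r r = 1 := villatK_self hr
  have hmono : StrictMonoOn (fun x : ℝ => (villatK r x).re) (Ico r 1) :=
    (strictMonoOn_re_villatK r).mono fun x hx => ⟨hr2.trans_le hx.1, hx.2⟩
  have hnorm (θ : ℝ) : ‖exp (θ * I) * ρ‖ = ρ := by
    rw [norm_mul, norm_exp_ofReal_mul_I, one_mul, norm_real, Real.norm_of_nonneg hρ0.le]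
  have hre (θ : ℝ) : |(exp (θ * I) * ρ).re| ≤ ρ := (abs_re_le_norm _).trans_eq (hnorm θ)
  refine ⟨fun θ => ?_, fun θ => ?_, ?_, ?_, ?_, hmono, hself⟩
  · refine re_villatK_le_of_norm_eq_of_re_le hr ?_ ?_ (abs_le.1 (hre θ)).2 <;>
      simp [abs_of_pos hρ0, hρ.1, hρ.2]
  · refine re_villatK_le_of_norm_eq_of_re_le hr ?_ ?_ (abs_le.1 (hre θ)).1 <;>
      simp [abs_of_pos hρ0, hρ.1, hρ.2]
  · simpa [hself] using hmono (left_mem_Ico.2 hr.2) ⟨hρ.1.le, hρ.2⟩ hρ.1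
  · exact re_villatK_ofReal_pos ⟨neg_lt_neg hρ.2, neg_lt_neg (hr2.trans hρ.1)⟩
  · exact re_villatK_ofReal_lt_one hr.1.le ⟨neg_lt_neg hρ.2, neg_lt_neg hρ.1⟩
end
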